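/- The packing chromatic number of the graph G_1 is at least 11; that is, G_1 admits no k-packing coloring for any k ≤ 10. -/

import Mathlib

/-- `W` is an `i`-packing in `G`: any two distinct vertices of `W` are at
graph distance greater than `i` in `G`. -/
def IsPacking {V : Type*} (G : SimpleGraph V) (i : ℕ) (W : Set V) : Prop :=
  ∀ u ∈ W, ∀ v ∈ W, u ≠ v → i < G.dist u v

/-- `c` is a `k`-packing coloring of `G`: every color lies in `{1, …, k}` and
for each `i ∈ {1, …, k}` the color class `c⁻¹(i)` is an `i`-packing. -/
def IsPackingColoring {V : Type*} (G : SimpleGraph V) (k : ℕ) (c : V → ℕ) : Prop :=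
  (∀ v, 1 ≤ c v ∧ c v ≤ k) ∧ ∀ i, 1 ≤ i → i ≤ k → IsPacking G i {v | c v = i}

/-- The packing chromatic number: the least `k` admitting a `k`-packing coloring. -/
noncomputable def packingChromaticNumber {V : Type*} (G : SimpleGraph V) : ℕ :=
  sInf {k | ∃ c : V → ℕ, IsPackingColoring G k c}


/-- Edges of `H`; vertices `y1,…,y7` are `0,…,6`, `z1,…,z7` are `7,…,13`,
and `w` is `14`. -/
def Hedges : List (Fin 15 × Fin 15) :=
  [(0,1),(1,2),(2,6),(6,5),(5,4),(4,0),(1,3),(3,5),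
   (7,8),(8,9),(9,13),(13,12),(12,11),(11,7),(8,10),(10,12),
   (3,14),(14,10),(2,7),(4,13)]

/-- The graph `H`. -/
def Hgraph : SimpleGraph (Fin 15) :=
  SimpleGraph.fromRel (fun u v => (u, v) ∈ Hedges)

/-- Glue two disjoint copies of `G` together with five new vertices
`Sum.inr (Sum.inr i)` for `i : Fin 5`: the `i`-th new vertex is adjacent
exactly to `p i` in the first copy and to `q i` in the second copy. -/
def glue {V : Type*} (G : SimpleGraph V) (p q : Fin 5 → V) :
    SimpleGraph (V ⊕ V ⊕ Fin 5) :=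
  SimpleGraph.fromRel (fun u v =>
    match u, v with
    | Sum.inl a, Sum.inl b => G.Adj a b
    | Sum.inr (Sum.inl a), Sum.inr (Sum.inl b) => G.Adj a b
    | Sum.inr (Sum.inr i), Sum.inl a => a = p i
    | Sum.inr (Sum.inr i), Sum.inr (Sum.inl b) => b = q i
    | _, _ => False)

/-- Attachment points of `a,b,c,d,x` in the first copy (`H'`):
`a ↦ y5`, `b ↦ z7`, `c ↦ y3`, `d ↦ z1`, `x ↦ w`. -/
def pH : Fin 5 → Fin 15 := ![4, 13, 2, 7, 14]

/-- Attachment points of `a,b,c,d,x` in the second copy (`H''`):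
`a ↦ y1`, `b ↦ z3`, `c ↦ z5`, `d ↦ y7`, `x ↦ w`. -/
def qH : Fin 5 → Fin 15 := ![0, 9, 11, 6, 14]

/-- The graph `G₀`: two disjoint copies of `H` plus the five vertices
`a,b,c,d,x`, which are `Sum.inr (Sum.inr 0), …, Sum.inr (Sum.inr 4)`. -/
def G₀ : SimpleGraph (Fin 15 ⊕ Fin 15 ⊕ Fin 5) := glue Hgraph pH qH

/-- The vertex type of `G_k`. -/
def Vt : ℕ → Type
  | 0 => Fin 15 ⊕ Fin 15 ⊕ Fin 5
  | k + 1 => Vt k ⊕ Vt k ⊕ Fin 5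

/-- The five distinguished vertices `a,b,c,d,x` of `G_k`. -/
def distV : (k : ℕ) → Fin 5 → Vt k
  | 0, i => Sum.inr (Sum.inr i)
  | _ + 1, i => Sum.inr (Sum.inr i)

/-- The graph `G_k`: for `k ≥ 1` it is obtained from two disjoint copies of
`G_{k-1}` by adding five new vertices, the `i`-th of which is adjacent exactly
to the `i`-th distinguished vertex of each of the two copies. -/
def Gk : (k : ℕ) → SimpleGraph (Vt k)
  | 0 => G₀
  | k + 1 => glue (Gk k) (distV k) (distV k)

/-!
Each gluing raises the diameter by at most 2: `G_k` has diameter at most `2k + 6`, so every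
color from `2k + 6` on occurs in it at most once. A packing coloring of `H` has at least four
vertices of color at least 4, and `H` has diameter at most 4, so at least two vertices have color
at least 6. Hence `G_0`, which contains two copies of `H`, has four vertices of color at least 6.
Inductively, four vertices of color at least `2k + 6` in `G_k` leave two of color at least `2k + 8`
in each of the two copies inside `G_{k+1}`, and therefore four in `G_{k+1}`. As the colors
`2k + 6`, `2k + 7`, `2k + 8` account for at most three of these four, color `2k + 9` or more occurs.

In `H`, every path on four vertices has a vertex of color at least 3, so each of its two sides has
at least two such vertices, and exactly two only in one rigid configuration, which cannot occur on
both sides at once. On each side the color 3 occurs at most once.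
-/

open Finset

section CardFilter

variable {α : Type*} {S T : Finset α} {P : α → Prop} [DecidablePred P]

theorem card_le_card_filter (hTS : T ⊆ S) (hT : ∀ v ∈ T, P v) : #T ≤ #{v ∈ S | P v} :=
  card_le_card fun v hv => mem_filter.mpr ⟨hTS hv, hT v hv⟩

theorem card_filter_insert [DecidableEq α] {a : α} (ha : a ∉ S) :
    #{v ∈ insert a S | P v} = #{v ∈ {a} | P v} + #{v ∈ S | P v} := by
  rw [insert_eq, filter_union, card_union_of_disjoint]
  exact disjoint_filter_filter (disjoint_singleton_left.mpr ha)

end CardFilter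

section PackingColoring

variable {V W : Type*} {G : SimpleGraph V} {G' : SimpleGraph W} {k i : ℕ} {c : V → ℕ}

theorem dist_map_le (hG : G.Preconnected) (f : G →g G') (u v : V) :
    G'.dist (f u) (f v) ≤ G.dist u v := by
  obtain ⟨p, hp⟩ := (hG u v).exists_walk_length_eq_dist
  calc G'.dist (f u) (f v) ≤ (p.map f).length := SimpleGraph.dist_le _
    _ = G.dist u v := by rw [SimpleGraph.Walk.length_map, hp]

theorem IsPackingColoring.lt_dist (hc : IsPackingColoring G k c) {u v : V} (huv : u ≠ v)
    (h : c u = c v) : c u < G.dist u v :=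
  hc.2 (c u) (hc.1 u).1 (hc.1 u).2 u rfl v h.symm huv

theorem IsPackingColoring.not_both_eq (hc : IsPackingColoring G k c) {u v : V} (huv : u ≠ v)
    (h : G.dist u v ≤ i) : ¬ (c u = i ∧ c v = i) := by
  rintro ⟨hu, hv⟩
  have := hc.lt_dist huv (hu.trans hv.symm)
  omega

theorem IsPackingColoring.ne_of_adj (hc : IsPackingColoring G k c) {u v : V} (h : G.Adj u v) :
    c u ≠ c v := by
  intro huv
  have hlt := hc.lt_dist h.ne huv
  rw [SimpleGraph.dist_eq_one_iff_adj.mpr h] at hlt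
  have := (hc.1 u).1
  omega

theorem IsPackingColoring.comp {c : W → ℕ} (hc : IsPackingColoring G' k c) (hG : G.Preconnected)
    (f : G →g G') (hf : Function.Injective f) : IsPackingColoring G k (c ∘ f) :=
  ⟨fun v => hc.1 (f v), fun i h1 hk u hu v hv huv =>
    (hc.2 i h1 hk (f u) hu (f v) hv (hf.ne huv)).trans_le (dist_map_le hG f u v)⟩

theorem exists_isPackingColoring (G : SimpleGraph V) [Finite V] :
    ∃ k c, IsPackingColoring G k c := by
  obtain ⟨n, ⟨e⟩⟩ := Finite.exists_equiv_fin V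
  refine ⟨n, fun v => e v + 1, fun v => ⟨Nat.succ_pos _, (e v).isLt⟩, ?_⟩
  intro i _ _ u hu v hv huv
  exact absurd (e.injective (Fin.ext (Nat.succ_injective (hu.trans hv.symm)))) huv

theorem lt_packingChromaticNumber [Finite V] {n : ℕ}
    (h : ∀ k ≤ n, ¬ ∃ c, IsPackingColoring G k c) : n < packingChromaticNumber G :=
  lt_of_not_ge fun hle => h _ hle (Nat.sInf_mem (exists_isPackingColoring G))

theorem IsPackingColoring.exists_three_le_of_path (hc : IsPackingColoring G k c) {u v x y : V}
    (huv : G.Adj u v) (hvx : G.Adj v x) (hxy : G.Adj x y) (hux : u ≠ x) (hvy : v ≠ y) :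
    3 ≤ c u ∨ 3 ≤ c v ∨ 3 ≤ c x ∨ 3 ≤ c y := by
  have hux2 := hc.not_both_eq (i := 2) hux (SimpleGraph.dist_le (.cons huv (.cons hvx .nil)))
  have hvy2 := hc.not_both_eq (i := 2) hvy (SimpleGraph.dist_le (.cons hvx (.cons hxy .nil)))
  have := hc.ne_of_adj huv
  have := hc.ne_of_adj hvx
  have := hc.ne_of_adj hxy
  have := (hc.1 u).1
  have := (hc.1 v).1
  have := (hc.1 x).1
  have := (hc.1 y).1
  omega

theorem IsPackingColoring.two_le_card_of_cycleGraph {n : ℕ} {c : Fin (n + 5) → ℕ}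
    (hc : IsPackingColoring (SimpleGraph.cycleGraph (n + 5)) k c) : 2 ≤ #{v | 3 ≤ c v} := by
  have exists_ne (v : Fin (n + 5)) : ∃ j ≠ v, 3 ≤ c j := by
    have adj_succ (v : Fin (n + 5)) : (SimpleGraph.cycleGraph (n + 5)).Adj v (v + 1) := by
      simp [SimpleGraph.cycleGraph_adj]
    have ne_add (v : Fin (n + 5)) :
        v + 1 ≠ v ∧ v + 1 + 1 ≠ v ∧ v + 1 + 1 + 1 ≠ v ∧ v + 1 + 1 + 1 + 1 ≠ v := by
      have := v.isLt
      simp only [ne_eq, Fin.ext_iff, Fin.val_add_eq_ite, Fin.val_one]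
      grind
    rcases hc.exists_three_le_of_path (adj_succ (v + 1)) (adj_succ _) (adj_succ _)
      (ne_add _).2.1.symm (ne_add _).2.1.symm with h | h | h | h
    · exact ⟨_, (ne_add v).1, h⟩
    · exact ⟨_, (ne_add v).2.1, h⟩
    · exact ⟨_, (ne_add v).2.2.1, h⟩
    · exact ⟨_, (ne_add v).2.2.2, h⟩
  obtain ⟨i, -, hi⟩ := exists_ne 0
  obtain ⟨j, hji, hj⟩ := exists_ne i
  exact one_lt_card.mpr ⟨j, by simpa using hj, i, by simpa using hi, hji⟩

theorem IsPackingColoring.two_le_card_of_cycle (hc : IsPackingColoring G k c) {n : ℕ}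
    (f : SimpleGraph.cycleGraph (n + 5) →g G) (hf : Function.Injective f) :
    2 ≤ #{v ∈ univ.map ⟨f, hf⟩ | 3 ≤ c v} := by
  rw [filter_map, card_map]
  exact (hc.comp SimpleGraph.cycleGraph_connected.preconnected f hf).two_le_card_of_cycleGraph

theorem IsPackingColoring.card_eq_le_one (hc : IsPackingColoring G k c) {S : Finset V}
    (hS : ∀ u ∈ S, ∀ v ∈ S, G.dist u v ≤ i) : #{v ∈ S | c v = i} ≤ 1 := by
  refine card_le_one.mpr fun u hu v hv => ?_
  rw [mem_filter] at hu hv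
  by_contra huv
  exact hc.not_both_eq huv (hS u hu.1 v hv.1) ⟨hu.2, hv.2⟩

theorem IsPackingColoring.card_le_card_add (hc : IsPackingColoring G k c) {S : Finset V}
    (hS : ∀ u ∈ S, ∀ v ∈ S, G.dist u v ≤ i) (m : ℕ) :
    #{v ∈ S | i ≤ c v} ≤ #{v ∈ S | i + m ≤ c v} + m := by
  classical
  induction m with
  | zero => rfl
  | succ m ih =>
    have hone : #{v ∈ S | c v = i + m} ≤ 1 :=
      hc.card_eq_le_one fun u hu v hv => (hS u hu v hv).trans (Nat.le_add_right i m)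
    have hsplit : {v ∈ S | i + m ≤ c v} ⊆ {v ∈ S | i + (m + 1) ≤ c v} ∪ {v ∈ S | c v = i + m} := by
      intro v
      grind
    have := (card_le_card hsplit).trans (card_union_le _ _)
    omega

end PackingColoring

section Glue

variable {V : Type*} {G : SimpleGraph V} {p q : Fin 5 → V} {n k : ℕ}

theorem glue_adj_left (G : SimpleGraph V) (p q : Fin 5 → V) (t : Fin 5) :
    (glue G p q).Adj (.inr (.inr t)) (.inl (p t)) := by
  simp [glue]

theorem glue_adj_right (G : SimpleGraph V) (p q : Fin 5 → V) (t : Fin 5) :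
    (glue G p q).Adj (.inr (.inr t)) (.inr (.inl (q t))) := by
  simp [glue]

/-- The inclusion of the first copy of `G` into `glue G p q`. -/
def glueLeft (G : SimpleGraph V) (p q : Fin 5 → V) : G →g glue G p q where
  toFun := Sum.inl
  map_rel' h := ⟨Sum.inl_injective.ne h.ne, Or.inl h⟩

/-- The inclusion of the second copy of `G` into `glue G p q`. -/
def glueRight (G : SimpleGraph V) (p q : Fin 5 → V) : G →g glue G p q where
  toFun v := Sum.inr (Sum.inl v)
  map_rel' h := ⟨(Sum.inr_injective.comp Sum.inl_injective).ne h.ne, Or.inl h⟩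

theorem glue_connected (hG : G.Connected) (p q : Fin 5 → V) : (glue G p q).Connected := by
  refine SimpleGraph.connected_iff_exists_forall_reachable _ |>.mpr ⟨.inr (.inr 0), ?_⟩
  have left (v : V) : (glue G p q).Reachable (.inr (.inr 0)) (.inl v) :=
    (glue_adj_left G p q 0).reachable.trans ((hG (p 0) v).map (glueLeft G p q))
  have right (v : V) : (glue G p q).Reachable (.inr (.inr 0)) (.inr (.inl v)) :=
    (glue_adj_right G p q 0).reachable.trans ((hG (q 0) v).map (glueRight G p q))
  rintro (v | v | t)
  · exact left v
  · exact right v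
  · exact (left (p t)).trans (glue_adj_left G p q t).reachable.symm

theorem glue_dist_left_le (hG : G.Connected) (v : V) (t : Fin 5) :
    (glue G p q).dist (.inl v) (.inr (.inr t)) ≤ G.dist v (p t) + 1 := by
  calc (glue G p q).dist (.inl v) (.inr (.inr t))
      ≤ (glue G p q).dist (.inl v) (.inl (p t)) +
          (glue G p q).dist (.inl (p t)) (.inr (.inr t)) := (glue_connected hG p q).dist_triangle
    _ ≤ G.dist v (p t) + 1 := add_le_add (dist_map_le hG.preconnected (glueLeft G p q) v (p t))
          (SimpleGraph.dist_eq_one_iff_adj.mpr (glue_adj_left G p q t).symm).le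

theorem glue_dist_right_le (hG : G.Connected) (v : V) (t : Fin 5) :
    (glue G p q).dist (.inr (.inl v)) (.inr (.inr t)) ≤ G.dist v (q t) + 1 := by
  calc (glue G p q).dist (.inr (.inl v)) (.inr (.inr t))
      ≤ (glue G p q).dist (.inr (.inl v)) (.inr (.inl (q t))) +
          (glue G p q).dist (.inr (.inl (q t))) (.inr (.inr t)) :=
        (glue_connected hG p q).dist_triangle
    _ ≤ G.dist v (q t) + 1 := add_le_add (dist_map_le hG.preconnected (glueRight G p q) v (q t))
          (SimpleGraph.dist_eq_one_iff_adj.mpr (glue_adj_right G p q t).symm).le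

/-- Every `u` and `v` have a common index `t` for which `u` to `p t` and `v` to `q t` together
have length at most `n`. Gluing `p t` and `q t` to a common new vertex turns this into a bound
on the distance between the copies of `u` and `v`. -/
def LinkedWithin (G : SimpleGraph V) (p q : Fin 5 → V) (n : ℕ) : Prop :=
  ∀ u v, ∃ t, G.dist u (p t) + G.dist v (q t) ≤ n

theorem LinkedWithin.dist_le (h : LinkedWithin G p p n) (hG : G.Connected) (u v : V) :
    G.dist u v ≤ n := by
  obtain ⟨t, ht⟩ := h u v
  calc G.dist u v ≤ G.dist u (p t) + G.dist (p t) v := hG.dist_triangle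
    _ ≤ n := by rwa [SimpleGraph.dist_comm (u := p t)]

theorem LinkedWithin.glue (hG : G.Connected) (hpp : LinkedWithin G p p n)
    (hqq : LinkedWithin G q q n) (hpq : LinkedWithin G p q n) :
    LinkedWithin (glue G p q) (fun t => .inr (.inr t)) (fun t => .inr (.inr t)) (n + 2) := by
  have left := glue_dist_left_le (p := p) (q := q) hG
  have right := glue_dist_right_le (p := p) (q := q) hG
  have diam := hpp.dist_le hG
  have self (t : Fin 5) : (_root_.glue G p q).dist (.inr (.inr t)) (.inr (.inr t)) = 0 :=
    SimpleGraph.dist_self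
  rintro (u | u | s) (v | v | t)
  · obtain ⟨t, ht⟩ := hpp u v
    exact ⟨t, by grind⟩
  · obtain ⟨t, ht⟩ := hpq u v
    exact ⟨t, by grind⟩
  · exact ⟨t, by grind⟩
  · obtain ⟨t, ht⟩ := hpq v u
    exact ⟨t, by grind⟩
  · obtain ⟨t, ht⟩ := hqq u v
    exact ⟨t, by grind⟩
  · exact ⟨t, by grind⟩
  · exact ⟨s, by grind⟩
  · exact ⟨s, by grind⟩
  · refine ⟨t, ?_⟩
    have : (_root_.glue G p q).dist (.inr (.inr s)) (.inr (.inr t)) ≤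
        (_root_.glue G p q).dist (.inr (.inr s)) (.inl (p s)) +
        (_root_.glue G p q).dist (.inl (p s)) (.inr (.inr t)) :=
      (glue_connected hG p q).dist_triangle
    have := SimpleGraph.dist_eq_one_iff_adj.mpr (glue_adj_left G p q s)
    grind

theorem IsPackingColoring.two_mul_le_card_glue [Fintype V] (hG : G.Connected) {m r : ℕ}
    (hr : ∀ c, IsPackingColoring G k c → r ≤ #{v | m ≤ c v}) {c : V ⊕ V ⊕ Fin 5 → ℕ}
    (hc : IsPackingColoring (glue G p q) k c) : 2 * r ≤ #{x | m ≤ c x} := by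
  have left : r ≤ #{v | m ≤ c (.inl v)} :=
    hr _ (hc.comp hG.preconnected (glueLeft G p q) Sum.inl_injective)
  have right : r ≤ #{v | m ≤ c (.inr (.inl v))} :=
    hr _ (hc.comp hG.preconnected (glueRight G p q) (Sum.inr_injective.comp Sum.inl_injective))
  simp only [card_filter, Fintype.sum_sum_type] at left right ⊢
  omega

end Glue

section JoinedWithin

variable {V : Type*} {G : SimpleGraph V} {n : ℕ} {u v : V}

/-- Some walk from `u` to `v` has length at most `n`. The recursive form makes upper bounds on
distances in a concrete finite graph decidable by evaluation. -/
def JoinedWithin (G : SimpleGraph V) : ℕ → V → V → Prop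
  | 0, u, v => u = v
  | n + 1, u, v => u = v ∨ ∃ x, G.Adj u x ∧ JoinedWithin G n x v

instance decidableJoinedWithin [Fintype V] [DecidableEq V] [DecidableRel G.Adj] :
    ∀ n u v, Decidable (JoinedWithin G n u v)
  | 0, u, v => inferInstanceAs (Decidable (u = v))
  | n + 1, u, v =>
    have := decidableJoinedWithin n
    inferInstanceAs (Decidable (u = v ∨ ∃ x, G.Adj u x ∧ JoinedWithin G n x v))

theorem JoinedWithin.exists_walk (h : JoinedWithin G n u v) : ∃ p : G.Walk u v, p.length ≤ n := by
  induction n generalizing u with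
  | zero => exact h ▸ ⟨.nil, le_rfl⟩
  | succ n ih =>
    rcases h with rfl | ⟨x, hux, hxv⟩
    · exact ⟨.nil, Nat.zero_le _⟩
    · obtain ⟨p, hp⟩ := ih hxv
      exact ⟨.cons hux p, Nat.succ_le_succ hp⟩

theorem JoinedWithin.reachable (h : JoinedWithin G n u v) : G.Reachable u v :=
  h.exists_walk.nonempty

theorem JoinedWithin.dist_le (h : JoinedWithin G n u v) : G.dist u v ≤ n :=
  let ⟨p, hp⟩ := h.exists_walk
  (SimpleGraph.dist_le p).trans hp

theorem LinkedWithin.of_joinedWithin {p q : Fin 5 → V}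
    (h : ∀ u v, ∃ t, ∃ ij ∈ antidiagonal n, JoinedWithin G ij.1 u (p t) ∧
      JoinedWithin G ij.2 v (q t)) : LinkedWithin G p q n := by
  intro u v
  obtain ⟨t, ij, hij, hu, hv⟩ := h u v
  exact ⟨t, (add_le_add hu.dist_le hv.dist_le).trans (mem_antidiagonal.mp hij).le⟩

theorem IsPackingColoring.not_both_eq_of_joinedWithin {k : ℕ} {c : V → ℕ}
    (hc : IsPackingColoring G k c) (u v : V) (i : ℕ)
    (h : u ≠ v ∧ JoinedWithin G i u v := by decide) : ¬ (c u = i ∧ c v = i) :=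
  hc.not_both_eq h.1 h.2.dist_le

end JoinedWithin

section GraphH

local notation "y₁" => (0 : Fin 15)
local notation "y₂" => (1 : Fin 15)
local notation "y₃" => (2 : Fin 15)
local notation "y₄" => (3 : Fin 15)
local notation "y₅" => (4 : Fin 15)
local notation "y₆" => (5 : Fin 15)
local notation "y₇" => (6 : Fin 15)
local notation "z₁" => (7 : Fin 15)
local notation "z₂" => (8 : Fin 15)
local notation "z₃" => (9 : Fin 15)
local notation "z₄" => (10 : Fin 15)
local notation "z₅" => (11 : Fin 15)
local notation "z₆" => (12 : Fin 15)
local notation "z₇" => (13 : Fin 15)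
local notation "w" => (14 : Fin 15)

instance decidableRelHgraphAdj : DecidableRel Hgraph.Adj :=
  inferInstanceAs (DecidableRel (SimpleGraph.fromRel fun u v => (u, v) ∈ Hedges).Adj)

theorem Hgraph_joinedWithin_four : ∀ u v, JoinedWithin Hgraph 4 u v := by
  decide +kernel

theorem Hgraph_connected : Hgraph.Connected :=
  ⟨fun u v => (Hgraph_joinedWithin_four u v).reachable⟩

theorem Hgraph_linkedWithin_pH_pH : LinkedWithin Hgraph pH pH 4 :=
  .of_joinedWithin (by decide +kernel)

theorem Hgraph_linkedWithin_qH_qH : LinkedWithin Hgraph qH qH 4 :=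
  .of_joinedWithin (by decide +kernel)

theorem Hgraph_linkedWithin_pH_qH : LinkedWithin Hgraph pH qH 4 :=
  .of_joinedWithin (by decide +kernel)

/-- The vertices `y₁, …, y₇` of `H`: two 5-cycles sharing the path `y₂ y₄ y₆`. -/
def Yside : Finset (Fin 15) := {y₁, y₂, y₃, y₄, y₅, y₆, y₇}

/-- The vertices `z₁, …, z₇` of `H`. -/
def Zside : Finset (Fin 15) := {z₁, z₂, z₃, z₄, z₅, z₆, z₇}

/-- The involutive automorphism of `H` that fixes `w` and exchanges the two sides, matching the
edge `y₃z₁` with itself and the edge `y₅z₇` with itself. -/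
def mirror : Hgraph ≃g Hgraph where
  toEquiv := Function.Involutive.toPerm
    ![z₃, z₂, z₁, z₄, z₇, z₆, z₅, y₃, y₂, y₁, y₄, y₇, y₆, y₅, w]
    (by unfold Function.Involutive; decide)
  map_rel_iff' := by decide

theorem Yside_map_mirror : Yside.map mirror.toEquiv.toEmbedding = Zside := by decide

theorem card_filter_univ_eq (P : Fin 15 → Prop) [DecidablePred P] :
    #{v | P v} = #{v ∈ Yside | P v} + #{v ∈ Zside | P v} + #{v ∈ {w} | P v} := by
  have huniv : (univ : Finset (Fin 15)) = (Yside ∪ Zside) ∪ {w} := by decide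
  rw [huniv, filter_union, card_union_of_disjoint (disjoint_filter_filter (by decide)),
    filter_union, card_union_of_disjoint (disjoint_filter_filter (by decide))]

/-- Among `y₁, …, y₇`, exactly `y₂` and `y₆` have a color greater than 2 under `c`: the rigid
configuration with the fewest such vertices. For the `z` side it reads `IsTight (c ∘ mirror)`. -/
def IsTight (c : Fin 15 → ℕ) : Prop := {v ∈ Yside | 3 ≤ c v} = {y₂, y₆}

variable {k : ℕ} {c : Fin 15 → ℕ}

theorem IsTight.card_Yside (h : IsTight c) : #{v ∈ Yside | 3 ≤ c v} = 2 := by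
  rw [h]
  rfl

theorem card_filter_Zside (P : Fin 15 → Prop) [DecidablePred P] :
    #{v ∈ Zside | P v} = #{v ∈ Yside | P (mirror v)} := by
  rw [← Yside_map_mirror, filter_map, card_map]
  rfl

namespace IsPackingColoring

theorem comp_mirror (hc : IsPackingColoring Hgraph k c) :
    IsPackingColoring Hgraph k (c ∘ mirror) :=
  hc.comp Hgraph_connected.preconnected mirror.toHom mirror.injective

theorem isTight_of_card_lt (hc : IsPackingColoring Hgraph k c)
    (hlt : #{v ∈ Yside | 3 ≤ c v} < 3) : IsTight c := by
  set R : Finset (Fin 15) := {v ∈ Yside | 3 ≤ c v}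
  have subset_of_cycle {n : ℕ} (f : SimpleGraph.cycleGraph (n + 5) →g Hgraph)
      (hf : Function.Injective f) (hY : ∀ i, f i ∈ Yside) : 2 ≤ #R ∧ ∀ v ∈ R, ∃ i, f i = v := by
    have hsub : {v ∈ univ.map ⟨f, hf⟩ | 3 ≤ c v} ⊆ R :=
      filter_subset_filter _ (by simpa [subset_iff] using hY)
    have htwo := hc.two_le_card_of_cycle f hf
    have heq := eq_of_subset_of_card_le hsub (by omega)
    refine ⟨heq ▸ htwo, fun v hv => ?_⟩
    rw [← heq] at hv
    simpa using (mem_filter.mp hv).1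
  obtain ⟨htwo, hleft⟩ := subset_of_cycle (n := 0)
    ⟨![y₁, y₂, y₄, y₆, y₅], by decide⟩ (by decide) (by decide)
  obtain ⟨-, hright⟩ := subset_of_cycle (n := 0)
    ⟨![y₃, y₂, y₄, y₆, y₇], by decide⟩ (by decide) (by decide)
  obtain ⟨-, houter⟩ := subset_of_cycle (n := 1)
    ⟨![y₁, y₂, y₃, y₇, y₆, y₅], by decide⟩ (by decide) (by decide)
  have hsub : R ⊆ {y₂, y₆} := by
    have inter_cycles : ∀ v, (∃ i, ![y₁, y₂, y₄, y₆, y₅] i = v) →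
        (∃ i, ![y₃, y₂, y₄, y₆, y₇] i = v) → (∃ i, ![y₁, y₂, y₃, y₇, y₆, y₅] i = v) →
        v ∈ ({y₂, y₆} : Finset (Fin 15)) := by decide
    exact fun v hv => inter_cycles v (hleft v hv) (hright v hv) (houter v hv)
  exact eq_of_subset_of_card_le hsub htwo

theorem colors_of_isTight (hc : IsPackingColoring Hgraph k c) (hY : IsTight c) :
    c y₄ = 1 ∧ (c y₁ = 2 ∧ c y₇ = 2 ∧ c y₃ = 1 ∧ c y₅ = 1 ∨
      c y₁ = 1 ∧ c y₇ = 1 ∧ c y₃ = 2 ∧ c y₅ = 2) := by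
  have le_two : ∀ v ∈ Yside \ {y₂, y₆}, c v ≤ 2 := by
    intro v hv
    rw [IsTight] at hY
    grind
  have h1 := le_two y₁ (by decide)
  have h3 := le_two y₃ (by decide)
  have h4 := le_two y₄ (by decide)
  have h5 := le_two y₅ (by decide)
  have h7 := le_two y₇ (by decide)
  have := (hc.1 y₁).1
  have := (hc.1 y₃).1
  have := (hc.1 y₄).1
  have := (hc.1 y₅).1
  have := (hc.1 y₇).1
  have := hc.not_both_eq_of_joinedWithin y₁ y₅ 1
  have := hc.not_both_eq_of_joinedWithin y₁ y₅ 2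
  have := hc.not_both_eq_of_joinedWithin y₃ y₇ 1
  have := hc.not_both_eq_of_joinedWithin y₃ y₇ 2
  have := hc.not_both_eq_of_joinedWithin y₁ y₃ 2
  have := hc.not_both_eq_of_joinedWithin y₅ y₇ 2
  have := hc.not_both_eq_of_joinedWithin y₁ y₄ 2
  have := hc.not_both_eq_of_joinedWithin y₅ y₄ 2
  omega

theorem four_le_card_Zside_of_ne_two (hc : IsPackingColoring Hgraph k c)
    (h2 : ∀ v ∈ Zside, c v ≠ 2) : 4 ≤ #{v ∈ Zside | 3 ≤ c v} := by
  have three_le_or (u v : Fin 15) (h : u ∈ Zside ∧ v ∈ Zside ∧ Hgraph.Adj u v := by decide) :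
      3 ≤ c u ∨ 3 ≤ c v := by
    have := hc.ne_of_adj h.2.2
    have := h2 u h.1
    have := h2 v h.2.1
    have := (hc.1 u).1
    have := (hc.1 v).1
    omega
  have := three_le_or z₁ z₂
  have := three_le_or z₂ z₄
  have := three_le_or z₄ z₆
  have := three_le_or z₆ z₅
  have := three_le_or z₅ z₁
  have := three_le_or z₃ z₇
  simp only [Zside, card_filter]
  repeat rw [sum_insert (by decide)]
  rw [sum_singleton]
  grind

theorem not_isTight_comp_mirror (hc : IsPackingColoring Hgraph k c) (hY : IsTight c) :
    ¬ IsTight (c ∘ mirror) := by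
  intro hZ
  obtain ⟨-, hYcolors⟩ := hc.colors_of_isTight hY
  obtain ⟨-, hZcolors⟩ : c z₄ = 1 ∧ (c z₃ = 2 ∧ c z₅ = 2 ∧ c z₁ = 1 ∧ c z₇ = 1 ∨
      c z₃ = 1 ∧ c z₅ = 1 ∧ c z₁ = 2 ∧ c z₇ = 2) := hc.comp_mirror.colors_of_isTight hZ
  have := hc.not_both_eq_of_joinedWithin y₃ z₁ 1
  have := hc.not_both_eq_of_joinedWithin y₃ z₁ 2
  have := hc.not_both_eq_of_joinedWithin y₇ z₁ 2
  have := hc.not_both_eq_of_joinedWithin y₃ z₅ 2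
  omega

theorem card_three_le_le {S : Finset (Fin 15)} (hc : IsPackingColoring Hgraph k c)
    (hS : ∀ u ∈ S, ∀ v ∈ S, JoinedWithin Hgraph 3 u v) :
    #{v ∈ S | 3 ≤ c v} ≤ #{v ∈ S | 4 ≤ c v} + 1 :=
  hc.card_le_card_add (fun u hu v hv => (hS u hu v hv).dist_le) 1

theorem card_three_le_Yside_le (hc : IsPackingColoring Hgraph k c) :
    #{v ∈ Yside | 3 ≤ c v} ≤ #{v ∈ Yside | 4 ≤ c v} + 1 :=
  hc.card_three_le_le (by decide +kernel)

theorem card_three_le_Zside_le (hc : IsPackingColoring Hgraph k c) :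
    #{v ∈ Zside | 3 ≤ c v} ≤ #{v ∈ Zside | 4 ≤ c v} + 1 :=
  hc.card_three_le_le (by decide +kernel)

theorem four_le_card_of_three_le_w (hc : IsPackingColoring Hgraph k c) (hw : 3 ≤ c w)
    (hY : 2 ≤ #{v ∈ Yside | 3 ≤ c v}) (hZ : 3 ≤ #{v ∈ Zside | 3 ≤ c v}) :
    4 ≤ #{v | 4 ≤ c v} := by
  have hwY := hc.card_three_le_le (S := insert w Yside) (by decide +kernel)
  have hwZ := hc.card_three_le_le (S := insert w Zside) (by decide +kernel)
  rw [card_filter_insert (by decide), card_filter_insert (by decide)] at hwY hwZ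
  have hw_three : #{v ∈ {w} | 3 ≤ c v} = 1 := by simp [filter_singleton, hw]
  have hw_four : #{v ∈ {w} | 4 ≤ c v} ≤ 1 := card_filter_le _ _
  rw [card_filter_univ_eq]
  omega

theorem exists_four_le_of_w_eq_two (hc : IsPackingColoring Hgraph k c) (hw : c w = 2)
    (h₄ : c z₄ ≠ 3) : 4 ≤ c z₄ ∨ 4 ≤ c z₂ ∨ 4 ≤ c z₆ := by
  have := hc.not_both_eq_of_joinedWithin w z₂ 2
  have := hc.not_both_eq_of_joinedWithin w z₄ 2
  have := hc.not_both_eq_of_joinedWithin w z₆ 2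
  have := hc.not_both_eq_of_joinedWithin z₂ z₄ 1
  have := hc.not_both_eq_of_joinedWithin z₆ z₄ 1
  have := hc.not_both_eq_of_joinedWithin z₂ z₆ 3
  have := (hc.1 z₂).1
  have := (hc.1 z₄).1
  have := (hc.1 z₆).1
  omega

theorem three_le_card_Zside_of_y₃_eq_one (hc : IsPackingColoring Hgraph k c) (hw : c w = 2)
    (h₁ : c y₁ = 2) (h₇ : c y₇ = 2) (h₃ : c y₃ = 1) (h₅ : c y₅ = 1)
    (h : c y₂ = 3 ∨ c y₆ = 3) : 3 ≤ #{v ∈ Zside | 4 ≤ c v} := by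
  have ne_three (v : Fin 15) (hv : v ∈ ({z₁, z₄, z₇} : Finset (Fin 15))) : c v ≠ 3 := by
    have near : ∀ v ∈ ({z₁, z₄, z₇} : Finset (Fin 15)),
        (y₂ ≠ v ∧ JoinedWithin Hgraph 3 y₂ v) ∧ (y₆ ≠ v ∧ JoinedWithin Hgraph 3 y₆ v) := by
      decide +kernel
    have := hc.not_both_eq_of_joinedWithin y₂ v 3 (near v hv).1
    have := hc.not_both_eq_of_joinedWithin y₆ v 3 (near v hv).2
    omega
  have four_le_z₁ : 4 ≤ c z₁ := by
    have := hc.not_both_eq_of_joinedWithin y₃ z₁ 1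
    have := hc.not_both_eq_of_joinedWithin y₇ z₁ 2
    have := ne_three z₁ (by decide)
    have := (hc.1 z₁).1
    omega
  have four_le_z₇ : 4 ≤ c z₇ := by
    have := hc.not_both_eq_of_joinedWithin y₅ z₇ 1
    have := hc.not_both_eq_of_joinedWithin y₁ z₇ 2
    have := ne_three z₇ (by decide)
    have := (hc.1 z₇).1
    omega
  rcases hc.exists_four_le_of_w_eq_two hw (ne_three z₄ (by decide)) with h | h | h
  · exact card_le_card_filter (T := {z₁, z₇, z₄}) (by decide) (by simp [*])
  · exact card_le_card_filter (T := {z₁, z₇, z₂}) (by decide) (by simp [*])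
  · exact card_le_card_filter (T := {z₁, z₇, z₆}) (by decide) (by simp [*])

theorem three_le_card_Zside_of_y₃_eq_two (hc : IsPackingColoring Hgraph k c) (hw : c w = 2)
    (h₃ : c y₃ = 2) (h₅ : c y₅ = 2) : 3 ≤ #{v ∈ Zside | 4 ≤ c v} := by
  have near : ∀ v ∈ Zside, ∃ u ∈ ({w, y₃, y₅} : Finset (Fin 15)),
      u ≠ v ∧ JoinedWithin Hgraph 2 u v := by decide +kernel
  have hfour := hc.four_le_card_Zside_of_ne_two fun v hv hv2 => by
    obtain ⟨u, hu, huv⟩ := near v hv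
    have hu2 : c u = 2 := by
      simp only [mem_insert, mem_singleton] at hu
      rcases hu with rfl | rfl | rfl <;> assumption
    exact hc.not_both_eq_of_joinedWithin u v 2 huv ⟨hu2, hv2⟩
  have := hc.card_three_le_Zside_le
  omega

theorem four_le_card_of_isTight (hc : IsPackingColoring Hgraph k c) (hY : IsTight c) :
    4 ≤ #{v | 4 ≤ c v} := by
  have hYcard := hY.card_Yside
  have hYfour := hc.card_three_le_Yside_le
  have hZfour := hc.card_three_le_Zside_le
  have hZcard : 3 ≤ #{v ∈ Zside | 3 ≤ c v} := by
    rw [card_filter_Zside]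
    by_contra! hlt
    exact hc.not_isTight_comp_mirror hY (hc.comp_mirror.isTight_of_card_lt hlt)
  obtain ⟨h₄, hcolors⟩ := hc.colors_of_isTight hY
  obtain hw | hw : c w = 2 ∨ 3 ≤ c w := by
    have := hc.not_both_eq_of_joinedWithin y₄ w 1
    have := (hc.1 w).1
    omega
  · rw [card_filter_univ_eq]
    rcases hcolors with ⟨h₁, h₇, h₃, h₅⟩ | ⟨-, -, h₃, h₅⟩
    · by_cases h : c y₂ = 3 ∨ c y₆ = 3
      · have := hc.three_le_card_Zside_of_y₃_eq_one hw h₁ h₇ h₃ h₅ h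
        omega
      · have : 2 ≤ #{v ∈ Yside | 4 ≤ c v} := by
          rw [← hYcard]
          refine card_le_card fun v hv => mem_filter.mpr ⟨(mem_filter.mp hv).1, ?_⟩
          have hv3 := (mem_filter.mp hv).2
          rw [hY] at hv
          grind
        omega
    · have := hc.three_le_card_Zside_of_y₃_eq_two hw h₃ h₅
      omega
  · exact hc.four_le_card_of_three_le_w hw hYcard.ge hZcard

theorem four_le_card_Hgraph (hc : IsPackingColoring Hgraph k c) : 4 ≤ #{v | 4 ≤ c v} := by
  by_cases hY : IsTight c
  · exact hc.four_le_card_of_isTight hY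
  by_cases hZ : IsTight (c ∘ mirror)
  · calc 4 ≤ #{v | 4 ≤ c (mirror v)} := hc.comp_mirror.four_le_card_of_isTight hZ
      _ = #{v | 4 ≤ c v} := card_equiv mirror.toEquiv (by simp)
  have hYcard : 3 ≤ #{v ∈ Yside | 3 ≤ c v} := not_lt.mp fun h => hY (hc.isTight_of_card_lt h)
  have hZcard : 3 ≤ #{v ∈ Zside | 3 ≤ c v} := by
    rw [card_filter_Zside]
    exact not_lt.mp fun h => hZ (hc.comp_mirror.isTight_of_card_lt h)
  have := hc.card_three_le_Yside_le
  have := hc.card_three_le_Zside_le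
  rw [card_filter_univ_eq]
  omega

theorem two_le_card_Hgraph (hc : IsPackingColoring Hgraph k c) : 2 ≤ #{v | 6 ≤ c v} := by
  have hfour := hc.four_le_card_Hgraph
  have hloss : #{v | 4 ≤ c v} ≤ #{v | 6 ≤ c v} + 2 :=
    hc.card_le_card_add (fun u _ v _ => (Hgraph_joinedWithin_four u v).dist_le) 2
  omega

end IsPackingColoring

end GraphH

section Gk

instance fintypeVt : ∀ k, Fintype (Vt k)
  | 0 => inferInstanceAs (Fintype (Fin 15 ⊕ Fin 15 ⊕ Fin 5))
  | k + 1 =>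
    have := fintypeVt k
    inferInstanceAs (Fintype (Vt k ⊕ Vt k ⊕ Fin 5))

theorem Gk_connected : ∀ k, (Gk k).Connected
  | 0 => glue_connected Hgraph_connected pH qH
  | k + 1 => glue_connected (Gk_connected k) (distV k) (distV k)

theorem Gk_linkedWithin : ∀ k, LinkedWithin (Gk k) (distV k) (distV k) (2 * k + 6)
  | 0 => .glue Hgraph_connected Hgraph_linkedWithin_pH_pH Hgraph_linkedWithin_qH_qH
      Hgraph_linkedWithin_pH_qH
  | k + 1 =>
    have ih := Gk_linkedWithin k
    .glue (Gk_connected k) ih ih ih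

theorem Gk_dist_le (k : ℕ) (u v : Vt k) : (Gk k).dist u v ≤ 2 * k + 6 :=
  (Gk_linkedWithin k).dist_le (Gk_connected k) u v

theorem IsPackingColoring.four_le_card_Gk {m : ℕ} :
    ∀ (k : ℕ) {c : Vt k → ℕ}, IsPackingColoring (Gk k) m c → 4 ≤ #{v | 2 * k + 6 ≤ c v}
  | 0, _, hc => two_mul_le_card_glue Hgraph_connected (fun _ => two_le_card_Hgraph) hc
  | k + 1, _, hc => by
    refine two_mul_le_card_glue (r := 2) (Gk_connected k) (fun c' hc' => ?_) hc
    have hfour := four_le_card_Gk k hc'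
    have hloss : #{v | 2 * k + 6 ≤ c' v} ≤ #{v | 2 * (k + 1) + 6 ≤ c' v} + 2 :=
      hc'.card_le_card_add (fun u _ v _ => Gk_dist_le k u v) 2
    omega

theorem not_exists_isPackingColoring_Gk {k m : ℕ} (hm : m ≤ 2 * k + 8) :
    ¬ ∃ c, IsPackingColoring (Gk k) m c := by
  rintro ⟨c, hc⟩
  have hfour := hc.four_le_card_Gk k
  have hloss : #{v | 2 * k + 6 ≤ c v} ≤ #{v | 2 * k + 9 ≤ c v} + 3 :=
    hc.card_le_card_add (fun u _ v _ => Gk_dist_le k u v) 3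
  have hnone : #{v | 2 * k + 9 ≤ c v} = 0 := by
    rw [card_eq_zero, filter_eq_empty_iff]
    intro v _
    have := (hc.1 v).2
    omega
  omega

end Gk

theorem stmt12_general (k : ℕ) :
    2 * k + 9 ≤ packingChromaticNumber (Gk k) ∧
    ∀ m ≤ 2 * k + 8, ¬ ∃ c : Vt k → ℕ, IsPackingColoring (Gk k) m c :=
  ⟨lt_packingChromaticNumber fun _ => not_exists_isPackingColoring_Gk,
    fun _ => not_exists_isPackingColoring_Gk⟩

/-- The packing chromatic number of `G₁` is at least `11`; that is, `G₁` admits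
no `k`-packing coloring for any `k ≤ 10`. -/
theorem stmt12 :
    11 ≤ packingChromaticNumber (Gk 1) ∧
    ∀ k ≤ 10, ¬ ∃ c : Vt 1 → ℕ, IsPackingColoring (Gk 1) k c :=
  stmt12_general 1
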